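/- Let A ∈ ℝ^{m×n} with n = l·d be partitioned into l consecutive orthonormal column blocks A[1],…,A[l] ∈ ℝ^{m×d} (i.e., (A[i])ᵀA[i] = I_d for all i), with block coherence μ_B satisfying μ_B < 1/((2k−1)d) for an integer k ≥ 2. Let b = Ax + z with ‖z‖₂ ≤ ε, let λ > 0, and let x^♯ be a minimizer of u ↦ ‖u‖_{2,1} + (1/(2λ))‖b − Au‖₂². Then ‖x^♯ − x‖₂ ≤ C₃·‖x − x_{{k}}‖_{2,1} + C₄, where C₃ = (2√k·β₁·f_k(β₂)·λ + 2·g_k(β₂)·ε)/(√k·(1 − √k·β₂)·(√k·β₁·λ + ε)) and C₄ = (√k·β₁·(5 + 2√k·β₂)·λ + 2·g_k(β₂)·ε)·(√k·β₁·λ + ε)/(√k·(1 − √k·β₂)·λ), with β₁ = √(1+(k−1)d·μ_B)/(1−(k−1)d·μ_B), β₂ = √k·d·μ_B/(1−(k−1)d·μ_B), f_k(t) = k t² + 3√k t + 3, and g_k(t) = 2k t² + 4√k t + 1. -/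

import Mathlib

noncomputable def l2norm {ι : Type*} [Fintype ι] (v : ι → ℝ) : ℝ :=
  Real.sqrt (∑ i, (v i) ^ 2)

/-- The `i`-th column block of a matrix whose columns are indexed by `Fin l × Fin d`. -/
def blk {m l d : ℕ} (A : Matrix (Fin m) (Fin l × Fin d) ℝ) (i : Fin l) :
    Matrix (Fin m) (Fin d) ℝ :=
  Matrix.of fun r j => A r (i, j)

/-- The spectral (ℓ2 operator) norm of a square matrix. -/
noncomputable def specNorm {d : ℕ} (M : Matrix (Fin d) (Fin d) ℝ) : ℝ :=
  ‖Matrix.toEuclideanCLM (𝕜 := ℝ) M‖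

/-- The block coherence of `A`: the largest spectral norm of `(A[i])ᵀ A[j]` over
pairs of distinct blocks. -/
noncomputable def blockCoherence {m l d : ℕ} (A : Matrix (Fin m) (Fin l × Fin d) ℝ) : ℝ :=
  ⨆ p : {p : Fin l × Fin l // p.1 ≠ p.2}, specNorm ((blk A p.1.1).transpose * blk A p.1.2)

/-- A vector is block `k`-sparse if at most `k` of its blocks are nonzero. -/
def blockSparse {l d : ℕ} (k : ℕ) (v : Fin l × Fin d → ℝ) : Prop :=
  (Finset.univ.filter fun i : Fin l => (fun j => v (i, j)) ≠ 0).card ≤ k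

/-- The mixed ℓ2/ℓ1-norm `‖v‖_{2,1} = ∑ i, ‖v[i]‖₂`. -/
noncomputable def l21norm {l d : ℕ} (v : Fin l × Fin d → ℝ) : ℝ :=
  ∑ i : Fin l, l2norm (fun j => v (i, j))

noncomputable def beta1 (k d : ℕ) (μB : ℝ) : ℝ :=
  Real.sqrt (1 + ((k : ℝ) - 1) * d * μB) / (1 - ((k : ℝ) - 1) * d * μB)

noncomputable def beta2 (k d : ℕ) (μB : ℝ) : ℝ :=
  Real.sqrt k * d * μB / (1 - ((k : ℝ) - 1) * d * μB)

noncomputable def fk (k : ℕ) (t : ℝ) : ℝ :=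
  (k : ℝ) * t ^ 2 + 3 * Real.sqrt k * t + 3

noncomputable def gk (k : ℕ) (t : ℝ) : ℝ :=
  2 * (k : ℝ) * t ^ 2 + 4 * Real.sqrt k * t + 1

/-!
Write `h = xs - x`. Low block coherence makes `A` nearly isometric on sums of `k` blocks, which
gives the robust null space property: the `ℓ²` norm of `h` on any `k` blocks is at most
`β₁ ‖A h‖ + β₂ a`, where `a` is the mixed norm of `h` on the other blocks.

Comparing the objective at `xs` and at `x` bounds `‖A h‖² - 2 ε ‖A h‖` by
`2 λ (‖x‖_{2,1} - ‖xs‖_{2,1})`. Splitting the mixed norms along the support of the block sparse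
approximation, and applying the null space property there, turns this into
`‖A h‖² - 2 q ‖A h‖ + 2 λ (1 - √k β₂) a ≤ 4 λ σ`, where `q = √k β₁ λ + ε` and `σ` is the mixed norm
of the approximation error. This quadratic inequality bounds both `‖A h‖` and `a`, hence `h` on its
`k` largest blocks by the null space property; the other blocks add at most `a / (2 √k)` to its
norm.
-/

open Finset
open scoped RealInnerProductSpace

section LargestEntries

variable {ι : Type*}

lemma sum_le_sqrt_mul_sqrt_sum_sq {f : ι → ℝ} {k : ℕ} {T : Finset ι} (hT : #T ≤ k) :
    ∑ i ∈ T, f i ≤ √k * √(∑ i ∈ T, f i ^ 2) := by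
  rw [← Real.sqrt_mul k.cast_nonneg]
  refine Real.le_sqrt_of_sq_le (sq_sum_le_card_mul_sum_sq.trans ?_)
  gcongr

lemma exists_isMaxOn_sum_card_le [Finite ι] (f : ι → ℝ) (k : ℕ) :
    ∃ T : Finset ι, #T ≤ k ∧ IsMaxOn (fun S => ∑ i ∈ S, f i) {S | #S ≤ k} T :=
  Set.exists_max_image {S : Finset ι | #S ≤ k} (fun S => ∑ i ∈ S, f i) (Set.toFinite _)
    ⟨∅, by simp⟩

variable {f : ι → ℝ} {k : ℕ} {T : Finset ι}

lemma mul_sq_le_sum_sq_of_isMaxOn (hf : 0 ≤ f) (hT : #T ≤ k)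
    (hmax : IsMaxOn (fun S => ∑ i ∈ S, f i) {S | #S ≤ k} T) {i : ι} (hi : i ∉ T) :
    k * f i ^ 2 ≤ ∑ j ∈ T, f j ^ 2 := by
  classical
  rcases hT.eq_or_lt with hcard | hcard
  · rw [← hcard, ← nsmul_eq_mul]
    refine card_nsmul_le_sum _ _ _ fun j hj => pow_le_pow_left₀ (hf i) ?_ 2
    have hi' : i ∉ T.erase j := fun h => hi (mem_of_mem_erase h)
    have hexchange : ∑ j ∈ insert i (T.erase j), f j ≤ ∑ j ∈ T, f j := hmax <| by
      rw [Set.mem_ofPred_eq, card_insert_of_notMem hi', card_erase_add_one hj]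
      exact hT
    rw [sum_insert hi'] at hexchange
    linarith [add_sum_erase T f hj]
  · have hinsert : ∑ j ∈ insert i T, f j ≤ ∑ j ∈ T, f j := hmax <| by
      rw [Set.mem_ofPred_eq, card_insert_of_notMem hi]
      exact hcard
    rw [sum_insert hi] at hinsert
    have hzero : f i = 0 := le_antisymm (by linarith) (hf i)
    rw [hzero]
    simpa using sum_nonneg fun j _ => sq_nonneg (f j)

lemma sqrt_sum_sq_le_of_isMaxOn [Fintype ι] [DecidableEq ι] (hf : 0 ≤ f) (hk : k ≠ 0) (hT : #T ≤ k)
    (hmax : IsMaxOn (fun S => ∑ i ∈ S, f i) {S | #S ≤ k} T) :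
    √(∑ i, f i ^ 2) ≤ √(∑ i ∈ T, f i ^ 2) + (∑ i ∈ Tᶜ, f i) / (2 * √k) := by
  have hsk : 0 < √(k : ℝ) := by positivity
  have ha : 0 ≤ ∑ i ∈ Tᶜ, f i := sum_nonneg fun i _ => hf i
  set p := √(∑ i ∈ T, f i ^ 2) with hp
  have hp_sq : p ^ 2 = ∑ i ∈ T, f i ^ 2 := Real.sq_sqrt (sum_nonneg fun i _ => sq_nonneg _)
  have hentry : ∀ i ∈ Tᶜ, f i ≤ p / √k := fun i hi => by
    rw [le_div_iff₀' hsk, hp, ← Real.sqrt_sq (hf i), ← Real.sqrt_mul k.cast_nonneg]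
    exact Real.sqrt_le_sqrt (mul_sq_le_sum_sq_of_isMaxOn hf hT hmax (mem_compl.1 hi))
  have htail : ∑ i ∈ Tᶜ, f i ^ 2 ≤ p / √k * ∑ i ∈ Tᶜ, f i := by
    rw [mul_sum]
    exact sum_le_sum fun i hi =>
      (sq (f i)).trans_le (mul_le_mul_of_nonneg_right (hentry i hi) (hf i))
  refine Real.sqrt_le_iff.2 ⟨by positivity, ?_⟩
  calc ∑ i, f i ^ 2 = p ^ 2 + ∑ i ∈ Tᶜ, f i ^ 2 := by rw [hp_sq, sum_add_sum_compl]
    _ ≤ p ^ 2 + p / √k * ∑ i ∈ Tᶜ, f i + ((∑ i ∈ Tᶜ, f i) / (2 * √k)) ^ 2 := by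
      linarith [sq_nonneg ((∑ i ∈ Tᶜ, f i) / (2 * √k))]
    _ = (p + (∑ i ∈ Tᶜ, f i) / (2 * √k)) ^ 2 := by field_simp; ring

end LargestEntries

section IncoherentVectors

variable {ι E : Type*} [SeminormedAddCommGroup E] [InnerProductSpace ℝ E] {V : ι → E} {ν : ℝ}

lemma abs_inner_sum_sum_le (hV : Pairwise fun i j => |⟪V i, V j⟫| ≤ ν * (‖V i‖ * ‖V j‖))
    {S T : Finset ι} (hST : Disjoint S T) :
    |⟪∑ i ∈ S, V i, ∑ j ∈ T, V j⟫| ≤ ν * ((∑ i ∈ S, ‖V i‖) * ∑ j ∈ T, ‖V j‖) := by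
  rw [sum_inner, sum_mul_sum, mul_sum]
  refine (abs_sum_le_sum_abs _ _).trans (sum_le_sum fun i hi => ?_)
  rw [inner_sum, mul_sum]
  exact (abs_sum_le_sum_abs _ _).trans
    (sum_le_sum fun j hj => hV (hST.forall_ne_finset hi hj))

lemma norm_sum_sq_eq_sum_add_sum_offDiag (V : ι → E) (T : Finset ι) :
    ‖∑ i ∈ T, V i‖ ^ 2 = ∑ i ∈ T, ‖V i‖ ^ 2 + ∑ p ∈ T.offDiag, ⟪V p.1, V p.2⟫ := by
  classical
  simp only [← real_inner_self_eq_norm_sq, sum_inner, inner_sum]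
  rw [sum_comm, ← sum_product', ← diag_union_offDiag, sum_union (disjoint_diag_offDiag T), sum_diag]

lemma abs_norm_sum_sq_sub_sum_sq_le (hν : 0 ≤ ν)
    (hV : Pairwise fun i j => |⟪V i, V j⟫| ≤ ν * (‖V i‖ * ‖V j‖)) (T : Finset ι) :
    |‖∑ i ∈ T, V i‖ ^ 2 - ∑ i ∈ T, ‖V i‖ ^ 2| ≤ (#T - 1) * ν * ∑ i ∈ T, ‖V i‖ ^ 2 := by
  have hnorms : ∑ p ∈ T.offDiag, ‖V p.1‖ * ‖V p.2‖ = (∑ i ∈ T, ‖V i‖) ^ 2 - ∑ i ∈ T, ‖V i‖ ^ 2 := by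
    have hreal := norm_sum_sq_eq_sum_add_sum_offDiag (fun i => ‖V i‖) T
    simp only [Real.norm_eq_abs, sq_abs, Real.inner_apply] at hreal
    linarith
  calc |‖∑ i ∈ T, V i‖ ^ 2 - ∑ i ∈ T, ‖V i‖ ^ 2| = |∑ p ∈ T.offDiag, ⟪V p.1, V p.2⟫| := by
        rw [norm_sum_sq_eq_sum_add_sum_offDiag, add_sub_cancel_left]
    _ ≤ ∑ p ∈ T.offDiag, ν * (‖V p.1‖ * ‖V p.2‖) :=
        (abs_sum_le_sum_abs _ _).trans (sum_le_sum fun p hp => hV (mem_offDiag.1 hp).2.2)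
    _ = ν * ((∑ i ∈ T, ‖V i‖) ^ 2 - ∑ i ∈ T, ‖V i‖ ^ 2) := by rw [← mul_sum, hnorms]
    _ ≤ ν * (#T * ∑ i ∈ T, ‖V i‖ ^ 2 - ∑ i ∈ T, ‖V i‖ ^ 2) := by
        gcongr
        exact sq_sum_le_card_mul_sum_sq
    _ = (#T - 1) * ν * ∑ i ∈ T, ‖V i‖ ^ 2 := by ring

lemma mul_sqrt_sum_sq_le_norm_sum_add [Fintype ι] [DecidableEq ι] (hν : 0 ≤ ν)
    (hV : Pairwise fun i j => |⟪V i, V j⟫| ≤ ν * (‖V i‖ * ‖V j‖)) {k : ℕ} {T : Finset ι}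
    (hT : #T ≤ k) :
    (1 - (k - 1) * ν) * √(∑ i ∈ T, ‖V i‖ ^ 2) ≤
      √(1 + (k - 1) * ν) * ‖∑ i, V i‖ + √k * ν * ∑ i ∈ Tᶜ, ‖V i‖ := by
  set P := ∑ i ∈ T, ‖V i‖ ^ 2
  set W := ∑ i ∈ T, V i
  set a := ∑ i ∈ Tᶜ, ‖V i‖
  have hP : 0 ≤ P := sum_nonneg fun i _ => sq_nonneg _
  have ha : 0 ≤ a := sum_nonneg fun i _ => norm_nonneg _
  have hT' : (#T - 1) * ν * P ≤ (k - 1) * ν * P := by gcongr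
  obtain ⟨hlower, hupper⟩ := abs_le.1 ((abs_norm_sum_sq_sub_sum_sq_le hν hV T).trans hT')
  have hW : ‖W‖ ≤ √(1 + (k - 1) * ν) * √P := by
    rw [← Real.sqrt_mul' _ hP]
    exact Real.le_sqrt_of_sq_le (by linarith)
  have hcross : |⟪W, ∑ i ∈ Tᶜ, V i⟫| ≤ ν * (√k * √P * a) :=
    (abs_inner_sum_sum_le hV disjoint_compl_right).trans <| by
      gcongr
      exact sum_le_sqrt_mul_sqrt_sum_sq hT
  have hsplit : ‖W‖ ^ 2 = ⟪W, ∑ i, V i⟫ - ⟪W, ∑ i ∈ Tᶜ, V i⟫ := by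
    rw [← sum_add_sum_compl T V, inner_add_right, real_inner_self_eq_norm_sq, add_sub_cancel_right]
  have hinner : ⟪W, ∑ i, V i⟫ ≤ √(1 + (k - 1) * ν) * √P * ‖∑ i, V i‖ :=
    (real_inner_le_norm _ _).trans (by gcongr)
  have hmul : (1 - (k - 1) * ν) * √P * √P ≤
      (√(1 + (k - 1) * ν) * ‖∑ i, V i‖ + √k * ν * a) * √P := by
    rw [mul_assoc, Real.mul_self_sqrt hP]
    linarith [neg_le_of_abs_le hcross]
  rcases (Real.sqrt_nonneg P).eq_or_lt with hzero | hpos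
  · rw [← hzero, mul_zero]
    positivity
  · exact le_of_mul_le_mul_right hmul hpos

end IncoherentVectors

section BasicInequalities

lemma sum_norm_sub_sum_norm_le {ι : Type*} [Fintype ι] [DecidableEq ι] {F : ι → Type*}
    [∀ i, SeminormedAddCommGroup (F i)] (x xs : ∀ i, F i) (S : Finset ι) :
    ∑ i, ‖x i‖ - ∑ i, ‖xs i‖ ≤
      ∑ i ∈ S, ‖xs i - x i‖ - ∑ i ∈ Sᶜ, ‖xs i - x i‖ + 2 * ∑ i ∈ Sᶜ, ‖x i‖ := by
  have hon : ∑ i ∈ S, ‖x i‖ ≤ ∑ i ∈ S, ‖xs i‖ + ∑ i ∈ S, ‖xs i - x i‖ := by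
    rw [← sum_add_distrib]
    exact sum_le_sum fun i _ => norm_le_norm_add_norm_sub (xs i) (x i)
  have hoff : ∑ i ∈ Sᶜ, ‖xs i - x i‖ ≤ ∑ i ∈ Sᶜ, ‖xs i‖ + ∑ i ∈ Sᶜ, ‖x i‖ := by
    rw [← sum_add_distrib]
    exact sum_le_sum fun i _ => norm_sub_le (xs i) (x i)
  rw [← sum_add_sum_compl S fun i => ‖x i‖, ← sum_add_sum_compl S fun i => ‖xs i‖]
  linarith

lemma sq_norm_sub_le_of_penalized_le {E : Type*} [SeminormedAddCommGroup E]
    [InnerProductSpace ℝ E] {z w : E} {p q lam ε : ℝ} (hlam : 0 < lam) (hz : ‖z‖ ≤ ε)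
    (hle : p + 1 / (2 * lam) * ‖z - w‖ ^ 2 ≤ q + 1 / (2 * lam) * ‖z‖ ^ 2) :
    ‖w‖ ^ 2 - 2 * ε * ‖w‖ ≤ 2 * lam * (q - p) := by
  have hzw : ⟪z, w⟫ ≤ ε * ‖w‖ := (real_inner_le_norm z w).trans (by gcongr)
  have hscaled : ‖z - w‖ ^ 2 - ‖z‖ ^ 2 ≤ 2 * lam * (q - p) := by
    rw [← div_le_iff₀' (by positivity), div_eq_inv_mul, ← one_div]
    linarith
  linarith [norm_sub_sq_real z w]

lemma le_two_mul_add_div_of_sq_sub_le {w q c : ℝ} (hq : 0 < q) (hc : 0 ≤ c)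
    (h : w ^ 2 - 2 * q * w ≤ c) : w ≤ 2 * q + c / (2 * q) := by
  by_contra! hw
  have hcq : 0 ≤ c / (2 * q) := by positivity
  have hmul : c / (2 * q) * (2 * q) = c := div_mul_cancel₀ c (by positivity)
  nlinarith

end BasicInequalities

section NullSpaceProperty

variable {ι : Type*} [Fintype ι] [DecidableEq ι] {F : ι → Type*}
  [∀ i, SeminormedAddCommGroup (F i)] [∀ i, NormedSpace ℝ (F i)] {E : Type*}
  [SeminormedAddCommGroup E]

/-- The `ℓ²`-robust block null space property of order `k`: the `ℓ²` norm of any `k` blocks of `h`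
is controlled by `‖Φ h‖` and the mixed norm of the remaining blocks. A block vector is a dependent
function `h : ∀ i, F i`. -/
def BlockNullSpaceProperty [NormedSpace ℝ E] (Φ : (∀ i, F i) →ₗ[ℝ] E) (k : ℕ) (β₁ β₂ : ℝ) : Prop :=
  ∀ (h : ∀ i, F i) (T : Finset ι), #T ≤ k →
    √(∑ i ∈ T, ‖h i‖ ^ 2) ≤ β₁ * ‖Φ h‖ + β₂ * ∑ i ∈ Tᶜ, ‖h i‖

variable [InnerProductSpace ℝ E] {Φ : (∀ i, F i) →ₗ[ℝ] E} {k : ℕ}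

theorem blockNullSpaceProperty_of_incoherent {ν : ℝ} (hν : 0 ≤ ν) (hkν : (k - 1) * ν < 1)
    (hnorm : ∀ i u, ‖Φ (Pi.single i u)‖ = ‖u‖)
    (hinner : ∀ i j, i ≠ j → ∀ u v, |⟪Φ (Pi.single i u), Φ (Pi.single j v)⟫| ≤ ν * (‖u‖ * ‖v‖)) :
    BlockNullSpaceProperty Φ k (√(1 + (k - 1) * ν) / (1 - (k - 1) * ν))
      (√k * ν / (1 - (k - 1) * ν)) := by
  intro h T hT
  have hV : Pairwise fun i j => |⟪Φ (Pi.single i (h i)), Φ (Pi.single j (h j))⟫| ≤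
      ν * (‖Φ (Pi.single i (h i))‖ * ‖Φ (Pi.single j (h j))‖) := fun i j hij => by
    simpa only [hnorm] using hinner i j hij (h i) (h j)
  have hbound := mul_sqrt_sum_sq_le_norm_sum_add hν hV hT
  rw [← map_sum, univ_sum_single] at hbound
  simp only [hnorm] at hbound
  rw [div_mul_eq_mul_div, div_mul_eq_mul_div, ← add_div, le_div_iff₀' (by linarith)]
  exact hbound

variable {β₁ β₂ lam ε σ : ℝ} {x xs : ∀ i, F i} {b : E} {S : Finset ι}

theorem BlockNullSpaceProperty.quadratic_le (hΦ : BlockNullSpaceProperty Φ k β₁ β₂)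
    (hlam : 0 < lam) (hε : ‖b - Φ x‖ ≤ ε)
    (hle : ∑ i, ‖xs i‖ + 1 / (2 * lam) * ‖b - Φ xs‖ ^ 2 ≤
      ∑ i, ‖x i‖ + 1 / (2 * lam) * ‖b - Φ x‖ ^ 2)
    (hS : #S ≤ k) (hσ : ∑ i ∈ Sᶜ, ‖x i‖ ≤ σ) :
    ‖Φ (xs - x)‖ ^ 2 - 2 * (√k * β₁ * lam + ε) * ‖Φ (xs - x)‖ +
      2 * lam * (1 - √k * β₂) * ∑ i ∈ Sᶜ, ‖xs i - x i‖ ≤ 4 * lam * σ := by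
  have hresidual : b - Φ xs = (b - Φ x) - Φ (xs - x) := by rw [map_sub]; abel
  rw [hresidual] at hle
  have hbasic := sq_norm_sub_le_of_penalized_le hlam hε hle
  have hsupport : ∑ i ∈ S, ‖xs i - x i‖ ≤
      √k * (β₁ * ‖Φ (xs - x)‖ + β₂ * ∑ i ∈ Sᶜ, ‖xs i - x i‖) :=
    (sum_le_sqrt_mul_sqrt_sum_sq hS).trans
      (mul_le_mul_of_nonneg_left (hΦ (xs - x) S hS) (Real.sqrt_nonneg _))
  have hcone : ∑ i, ‖x i‖ - ∑ i, ‖xs i‖ ≤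
      √k * (β₁ * ‖Φ (xs - x)‖ + β₂ * ∑ i ∈ Sᶜ, ‖xs i - x i‖) -
        ∑ i ∈ Sᶜ, ‖xs i - x i‖ + 2 * σ := by
    linarith [sum_norm_sub_sum_norm_le x xs S]
  linarith [mul_le_mul_of_nonneg_left hcone (by positivity : 0 ≤ 2 * lam)]

lemma BlockNullSpaceProperty.sqrt_sum_sq_le (hΦ : BlockNullSpaceProperty Φ k β₁ β₂) (hk : k ≠ 0)
    (hβ₂ : 0 ≤ β₂) (h : ∀ i, F i) (hS : #S ≤ k) :
    √(∑ i, ‖h i‖ ^ 2) ≤ β₁ * ‖Φ h‖ + (β₂ + 1 / (2 * √k)) * ∑ i ∈ Sᶜ, ‖h i‖ := by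
  obtain ⟨T, hT, hmax⟩ := exists_isMaxOn_sum_card_le (fun i => ‖h i‖) k
  have htail : ∑ i ∈ Tᶜ, ‖h i‖ ≤ ∑ i ∈ Sᶜ, ‖h i‖ := by
    have hST : ∑ i ∈ S, ‖h i‖ ≤ ∑ i ∈ T, ‖h i‖ := hmax hS
    linarith [sum_add_sum_compl S fun i => ‖h i‖, sum_add_sum_compl T fun i => ‖h i‖]
  calc √(∑ i, ‖h i‖ ^ 2) ≤ √(∑ i ∈ T, ‖h i‖ ^ 2) + (∑ i ∈ Tᶜ, ‖h i‖) / (2 * √k) :=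
        sqrt_sum_sq_le_of_isMaxOn (fun i => norm_nonneg (h i)) hk hT hmax
    _ ≤ β₁ * ‖Φ h‖ + β₂ * ∑ i ∈ Tᶜ, ‖h i‖ + (∑ i ∈ Tᶜ, ‖h i‖) / (2 * √k) := by
        gcongr
        exact hΦ h T hT
    _ = β₁ * ‖Φ h‖ + (β₂ + 1 / (2 * √k)) * ∑ i ∈ Tᶜ, ‖h i‖ := by ring
    _ ≤ β₁ * ‖Φ h‖ + (β₂ + 1 / (2 * √k)) * ∑ i ∈ Sᶜ, ‖h i‖ := by gcongr

theorem BlockNullSpaceProperty.sqrt_sum_sq_sub_le (hΦ : BlockNullSpaceProperty Φ k β₁ β₂)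
    (hk : k ≠ 0) (hβ₁ : 0 < β₁) (hβ₂ : 0 ≤ β₂) (hkβ₂ : √k * β₂ < 1) (hlam : 0 < lam)
    (hε : ‖b - Φ x‖ ≤ ε)
    (hle : ∑ i, ‖xs i‖ + 1 / (2 * lam) * ‖b - Φ xs‖ ^ 2 ≤
      ∑ i, ‖x i‖ + 1 / (2 * lam) * ‖b - Φ x‖ ^ 2)
    (hS : #S ≤ k) (hσ : ∑ i ∈ Sᶜ, ‖x i‖ ≤ σ) :
    √(∑ i, ‖xs i - x i‖ ^ 2) ≤
      (2 * β₁ * lam / (√k * β₁ * lam + ε) + (2 * β₂ + 1 / √k) / (1 - √k * β₂)) * σ +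
        (2 * β₁ * (√k * β₁ * lam + ε) +
          (β₂ + 1 / (2 * √k)) * (√k * β₁ * lam + ε) ^ 2 / (2 * lam * (1 - √k * β₂))) := by
  have hquad := hΦ.quadratic_le hlam hε hle hS hσ
  have hε₀ : 0 ≤ ε := (norm_nonneg _).trans hε
  have hσ₀ : 0 ≤ σ := (sum_nonneg fun i _ => norm_nonneg _).trans hσ
  have hρ : 0 < 1 - √k * β₂ := sub_pos.2 hkβ₂
  set q := √k * β₁ * lam + ε
  set a := ∑ i ∈ Sᶜ, ‖xs i - x i‖
  have hq : 0 < q := by positivity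
  have ha₀ : 0 ≤ 2 * lam * (1 - √k * β₂) * a := by positivity
  have hw : ‖Φ (xs - x)‖ ≤ 2 * q + 4 * lam * σ / (2 * q) :=
    le_two_mul_add_div_of_sq_sub_le hq (by positivity) (by linarith)
  have ha : a ≤ (4 * lam * σ + q ^ 2) / (2 * lam * (1 - √k * β₂)) := by
    rw [le_div_iff₀' (by positivity)]
    linarith [sq_nonneg (‖Φ (xs - x)‖ - q)]
  calc √(∑ i, ‖xs i - x i‖ ^ 2) ≤ β₁ * ‖Φ (xs - x)‖ + (β₂ + 1 / (2 * √k)) * a :=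
        hΦ.sqrt_sum_sq_le hk hβ₂ (xs - x) hS
    _ ≤ β₁ * (2 * q + 4 * lam * σ / (2 * q)) +
          (β₂ + 1 / (2 * √k)) * ((4 * lam * σ + q ^ 2) / (2 * lam * (1 - √k * β₂))) := by
        gcongr
    _ = _ := by
        field_simp
        ring

end NullSpaceProperty

section Constants

variable {k : ℕ}

lemma fk_eq (k : ℕ) (t : ℝ) : fk k t = (√k * t) ^ 2 + 3 * (√k * t) + 3 := by
  rw [fk, mul_pow, Real.sq_sqrt k.cast_nonneg, mul_assoc 3]

lemma gk_eq (k : ℕ) (t : ℝ) : gk k t = 2 * (√k * t) ^ 2 + 4 * (√k * t) + 1 := by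
  rw [gk, mul_pow, Real.sq_sqrt k.cast_nonneg, mul_assoc 4, mul_assoc 2]

section ErrorBound

variable {β₁ β₂ lam ε : ℝ}

lemma error_coeff_le (hk : k ≠ 0) (hβ₁ : 0 < β₁) (hβ₂ : 0 ≤ β₂) (hkβ₂ : √k * β₂ < 1)
    (hlam : 0 < lam) (hε : 0 ≤ ε) :
    2 * β₁ * lam / (√k * β₁ * lam + ε) + (2 * β₂ + 1 / √k) / (1 - √k * β₂) ≤
      (2 * √k * β₁ * fk k β₂ * lam + 2 * gk k β₂ * ε) /
        (√k * (1 - √k * β₂) * (√k * β₁ * lam + ε)) := by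
  have hρ : 0 < 1 - √k * β₂ := sub_pos.2 hkβ₂
  have hq : 0 < √k * β₁ * lam + ε := by positivity
  have hnum : 0 ≤ √k * β₁ * lam * (2 * (√k * β₂) ^ 2 + 6 * (√k * β₂) + 3) +
      ε * (4 * (√k * β₂) ^ 2 + 6 * (√k * β₂) + 1) := by positivity
  calc 2 * β₁ * lam / (√k * β₁ * lam + ε) + (2 * β₂ + 1 / √k) / (1 - √k * β₂)
      = (2 * (√k * β₁ * lam) * (1 - √k * β₂) + (2 * (√k * β₂) + 1) * (√k * β₁ * lam + ε)) /
          (√k * (1 - √k * β₂) * (√k * β₁ * lam + ε)) := by field_simp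
    _ ≤ _ := by
      rw [fk_eq, gk_eq]
      gcongr ?_ / _
      linarith

lemma error_const_le (hk : k ≠ 0) (hβ₁ : 0 < β₁) (hβ₂ : 0 ≤ β₂) (hkβ₂ : √k * β₂ < 1)
    (hlam : 0 < lam) (hε : 0 ≤ ε) :
    2 * β₁ * (√k * β₁ * lam + ε) +
        (β₂ + 1 / (2 * √k)) * (√k * β₁ * lam + ε) ^ 2 / (2 * lam * (1 - √k * β₂)) ≤
      (√k * β₁ * (5 + 2 * √k * β₂) * lam + 2 * gk k β₂ * ε) * (√k * β₁ * lam + ε) /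
        (√k * (1 - √k * β₂) * lam) := by
  have hρ : 0 < 1 - √k * β₂ := sub_pos.2 hkβ₂
  have hnum : 0 ≤ √k * β₁ * lam * (11 / 4 + 7 / 2 * (√k * β₂)) +
      ε * (4 * (√k * β₂) ^ 2 + 15 / 2 * (√k * β₂) + 7 / 4) := by positivity
  calc 2 * β₁ * (√k * β₁ * lam + ε) +
        (β₂ + 1 / (2 * √k)) * (√k * β₁ * lam + ε) ^ 2 / (2 * lam * (1 - √k * β₂))
      = (2 * (√k * β₁ * lam) * (1 - √k * β₂) +
          (√k * β₂ / 2 + 1 / 4) * (√k * β₁ * lam + ε)) * (√k * β₁ * lam + ε) /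
            (√k * (1 - √k * β₂) * lam) := by
        field_simp
        ring
    _ ≤ _ := by
      rw [gk_eq]
      gcongr ?_ * _ / _
      linarith

end ErrorBound

variable {c : ℕ} {μ : ℝ}

lemma ne_zero_and_mul_lt_one_of_lt_one_div (hμ : 0 ≤ μ) (hlt : μ < 1 / ((2 * (k : ℝ) - 1) * c)) :
    k ≠ 0 ∧ c ≠ 0 ∧ (2 * k - 1) * (c * μ) < 1 := by
  have hpos : 0 < (2 * (k : ℝ) - 1) * c := one_div_pos.1 (hμ.trans_lt hlt)
  refine ⟨?_, ?_, ?_⟩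
  · rintro rfl
    norm_num at hpos
    exact hpos.not_ge c.cast_nonneg
  · rintro rfl
    simp at hpos
  · rw [lt_div_iff₀' hpos] at hlt
    linarith

lemma sub_one_mul_lt_one {ν : ℝ} (hν : 0 ≤ ν)
    (hlt : (2 * k - 1) * ν < 1) : (k - 1) * ν < 1 := by
  have : (0 : ℝ) ≤ k * ν := by positivity
  linarith

lemma beta1_pos (hk : k ≠ 0) (hμ : 0 ≤ μ) (hlt : (k - 1) * (c * μ) < 1) : 0 < beta1 k c μ := by
  have hk' : (1 : ℝ) ≤ k := by exact_mod_cast Nat.one_le_iff_ne_zero.2 hk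
  have hnonneg : 0 ≤ (k - 1) * (c * μ) := mul_nonneg (sub_nonneg.2 hk') (by positivity)
  rw [beta1, mul_assoc]
  exact div_pos (Real.sqrt_pos.2 (by linarith)) (sub_pos.2 hlt)

lemma beta2_nonneg (hμ : 0 ≤ μ) (hlt : (k - 1) * (c * μ) < 1) : 0 ≤ beta2 k c μ := by
  rw [beta2, mul_assoc (_ - _)]
  exact div_nonneg (by positivity) (sub_pos.2 hlt).le

lemma sqrt_mul_beta2_lt_one (hμ : 0 ≤ μ) (hlt : (2 * k - 1) * (c * μ) < 1) :
    √k * beta2 k c μ < 1 := by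
  have hpos : (k - 1) * (c * μ) < 1 :=
    sub_one_mul_lt_one (by positivity) hlt
  rw [beta2, mul_assoc, mul_assoc (_ - _), ← mul_div_assoc, ← mul_assoc,
    Real.mul_self_sqrt k.cast_nonneg, div_lt_one (sub_pos.2 hpos)]
  linarith

end Constants

section BlockMatrices

lemma l2norm_eq_norm_toLp {ι : Type*} [Fintype ι] (v : ι → ℝ) : l2norm v = ‖WithLp.toLp 2 v‖ := by
  simp [EuclideanSpace.norm_eq, l2norm]

lemma inner_toEuclideanLin_toEuclideanLin {m n p : Type*} [Fintype m] [Fintype n] [Fintype p]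
    [DecidableEq n] [DecidableEq p] (M : Matrix m n ℝ) (N : Matrix m p ℝ)
    (u : EuclideanSpace ℝ n) (v : EuclideanSpace ℝ p) :
    ⟪M.toEuclideanLin u, N.toEuclideanLin v⟫ = ⟪u, (M.transpose * N).toEuclideanLin v⟫ := by
  classical
  rw [← Matrix.conjTranspose_eq_transpose_of_trivial, Matrix.toLpLin_mul_same,
    LinearMap.comp_apply, Matrix.toEuclideanLin_conjTranspose_eq_adjoint,
    LinearMap.adjoint_inner_right]

variable {m l d : ℕ}

/-- The family of blocks `v[1], …, v[l]` of a vector, with the Euclidean norm on each block. -/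
def blockVec (v : Fin l × Fin d → ℝ) (i : Fin l) : EuclideanSpace ℝ (Fin d) :=
  WithLp.toLp 2 fun j => v (i, j)

/-- The action `h ↦ ∑ i, A[i] h[i]` of a block matrix on families of blocks. -/
noncomputable def blockMap (A : Matrix (Fin m) (Fin l × Fin d) ℝ) :
    (Fin l → EuclideanSpace ℝ (Fin d)) →ₗ[ℝ] EuclideanSpace ℝ (Fin m) :=
  LinearMap.lsum ℝ _ ℝ fun i => (blk A i).toEuclideanLin

lemma l21norm_eq_sum_norm_blockVec (v : Fin l × Fin d → ℝ) : l21norm v = ∑ i, ‖blockVec v i‖ := by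
  simp only [l21norm, l2norm_eq_norm_toLp, blockVec]

lemma l2norm_eq_sqrt_sum_norm_blockVec_sq (v : Fin l × Fin d → ℝ) :
    l2norm v = √(∑ i, ‖blockVec v i‖ ^ 2) := by
  simp only [l2norm, EuclideanSpace.norm_sq_eq, blockVec, Real.norm_eq_abs, sq_abs,
    Fintype.sum_prod_type]

lemma toLp_mulVec_eq_blockMap (A : Matrix (Fin m) (Fin l × Fin d) ℝ) (v : Fin l × Fin d → ℝ) :
    WithLp.toLp 2 (A.mulVec v) = blockMap A (blockVec v) := by
  ext r
  simp [blockMap, blockVec, blk, Matrix.mulVec, dotProduct, Fintype.sum_prod_type,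
    LinearMap.lsum_apply]

lemma l2norm_sub_mulVec (A : Matrix (Fin m) (Fin l × Fin d) ℝ) (b : Fin m → ℝ)
    (v : Fin l × Fin d → ℝ) :
    l2norm (b - A.mulVec v) = ‖WithLp.toLp 2 b - blockMap A (blockVec v)‖ := by
  rw [l2norm_eq_norm_toLp, WithLp.toLp_sub, toLp_mulVec_eq_blockMap]

lemma exists_card_le_sum_compl_norm_blockVec_le {k : ℕ} {y : Fin l × Fin d → ℝ}
    (hy : blockSparse k y) (x : Fin l × Fin d → ℝ) :
    ∃ S : Finset (Fin l), #S ≤ k ∧ ∑ i ∈ Sᶜ, ‖blockVec x i‖ ≤ l21norm (x - y) := by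
  refine ⟨_, hy, ?_⟩
  rw [l21norm_eq_sum_norm_blockVec]
  refine le_of_eq_of_le (sum_congr rfl fun i hi => ?_)
    (sum_le_sum_of_subset_of_nonneg (subset_univ _) fun i _ _ => norm_nonneg _)
  have hyi : (fun j => y (i, j)) = 0 := by simpa using hi
  congr 1
  ext j
  simp [blockVec, show y (i, j) = 0 from congrFun hyi j]

variable {A : Matrix (Fin m) (Fin l × Fin d) ℝ}

lemma blockMap_single (i : Fin l) (u : EuclideanSpace ℝ (Fin d)) :
    blockMap A (Pi.single i u) = (blk A i).toEuclideanLin u :=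
  LinearMap.lsum_piSingle ..

lemma norm_blockMap_single {i : Fin l} (hA : (blk A i).transpose * blk A i = 1)
    (u : EuclideanSpace ℝ (Fin d)) : ‖blockMap A (Pi.single i u)‖ = ‖u‖ := by
  rw [← sq_eq_sq₀ (norm_nonneg _) (norm_nonneg _), ← real_inner_self_eq_norm_sq, blockMap_single,
    inner_toEuclideanLin_toEuclideanLin, hA, ← real_inner_self_eq_norm_sq]
  simp

lemma blockCoherence_nonneg : 0 ≤ blockCoherence A :=
  Real.iSup_nonneg fun _ => norm_nonneg _

lemma specNorm_le_blockCoherence {i j : Fin l} (hij : i ≠ j) :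
    specNorm ((blk A i).transpose * blk A j) ≤ blockCoherence A :=
  le_ciSup (f := fun p : {p : Fin l × Fin l // p.1 ≠ p.2} =>
    specNorm ((blk A p.1.1).transpose * blk A p.1.2)) (Set.finite_range _).bddAbove ⟨(i, j), hij⟩

lemma abs_inner_blockMap_single_le {i j : Fin l} (hij : i ≠ j) (u v : EuclideanSpace ℝ (Fin d)) :
    |⟪blockMap A (Pi.single i u), blockMap A (Pi.single j v)⟫| ≤
      blockCoherence A * (‖u‖ * ‖v‖) := by
  set M := (blk A i).transpose * blk A j
  have hM : ‖M.toEuclideanLin v‖ ≤ blockCoherence A * ‖v‖ :=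
    ((Matrix.toEuclideanCLM (𝕜 := ℝ) M).le_opNorm v).trans
      (mul_le_mul_of_nonneg_right (specNorm_le_blockCoherence hij) (norm_nonneg v))
  calc |⟪blockMap A (Pi.single i u), blockMap A (Pi.single j v)⟫|
      = |⟪u, M.toEuclideanLin v⟫| := by
        rw [blockMap_single, blockMap_single, inner_toEuclideanLin_toEuclideanLin]
    _ ≤ ‖u‖ * (blockCoherence A * ‖v‖) := (abs_real_inner_le_norm _ _).trans (by gcongr)
    _ = blockCoherence A * (‖u‖ * ‖v‖) := by ring

theorem blockNullSpaceProperty_blockMap (hA : ∀ i, (blk A i).transpose * blk A i = 1) {k c : ℕ}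
    (hc : c ≠ 0) (hlt : (k - 1) * (c * blockCoherence A) < 1) :
    BlockNullSpaceProperty (blockMap A) k (beta1 k c (blockCoherence A))
      (beta2 k c (blockCoherence A)) := by
  have hμ : 0 ≤ blockCoherence A := blockCoherence_nonneg
  have hle : blockCoherence A ≤ c * blockCoherence A :=
    le_mul_of_one_le_left hμ (by exact_mod_cast Nat.one_le_iff_ne_zero.2 hc)
  simp only [beta1, beta2, mul_assoc]
  exact blockNullSpaceProperty_of_incoherent (hμ.trans hle) hlt
    (fun i => norm_blockMap_single (hA i)) fun i j hij u v =>
      (abs_inner_blockMap_single_le hij u v).trans (by gcongr)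

end BlockMatrices

/-- The integer `c` takes the place of the block length `d` in the coherence condition and in `β₁`,
`β₂`: `c = d` gives the paper's constants, `c = 1` the weakest condition. -/
theorem stmt_19_general {m l d : ℕ} (A : Matrix (Fin m) (Fin l × Fin d) ℝ)
    (hA : ∀ i, (blk A i).transpose * blk A i = 1)
    (k c : ℕ)
    (hμB : blockCoherence A < 1 / ((2 * (k : ℝ) - 1) * c))
    (x : Fin l × Fin d → ℝ) (z : Fin m → ℝ) (b : Fin m → ℝ) (hb : b = A.mulVec x + z)
    (ε lam : ℝ) (hz : l2norm z ≤ ε) (hlam : 0 < lam)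
    (xs : Fin l × Fin d → ℝ)
    (hle : l21norm xs + 1 / (2 * lam) * l2norm (b - A.mulVec xs) ^ 2 ≤
        l21norm x + 1 / (2 * lam) * l2norm (b - A.mulVec x) ^ 2)
    (y : Fin l × Fin d → ℝ) (hy : blockSparse k y) :
    l2norm (xs - x) ≤
      (2 * √k * beta1 k c (blockCoherence A) * fk k (beta2 k c (blockCoherence A)) * lam
          + 2 * gk k (beta2 k c (blockCoherence A)) * ε)
        / (√k * (1 - √k * beta2 k c (blockCoherence A))
          * (√k * beta1 k c (blockCoherence A) * lam + ε)) * l21norm (x - y)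
      + (√k * beta1 k c (blockCoherence A)
            * (5 + 2 * √k * beta2 k c (blockCoherence A)) * lam
          + 2 * gk k (beta2 k c (blockCoherence A)) * ε)
        * (√k * beta1 k c (blockCoherence A) * lam + ε)
        / (√k * (1 - √k * beta2 k c (blockCoherence A)) * lam) := by
  have hμ : 0 ≤ blockCoherence A := blockCoherence_nonneg
  obtain ⟨hk, hc, hlt⟩ := ne_zero_and_mul_lt_one_of_lt_one_div hμ hμB
  have hlt' := sub_one_mul_lt_one (by positivity) hlt
  have hβ₁ := beta1_pos hk hμ hlt'
  have hβ₂ := beta2_nonneg hμ hlt'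
  have hkβ₂ := sqrt_mul_beta2_lt_one hμ hlt
  have hε : 0 ≤ ε := (Real.sqrt_nonneg _).trans hz
  obtain ⟨S, hS, hσ⟩ := exists_card_le_sum_compl_norm_blockVec_le hy x
  rw [← add_sub_cancel_left (A.mulVec x) z, ← hb, l2norm_sub_mulVec] at hz
  simp only [l21norm_eq_sum_norm_blockVec xs, l21norm_eq_sum_norm_blockVec x,
    l2norm_sub_mulVec] at hle
  have hσ₀ : 0 ≤ l21norm (x - y) := (sum_nonneg fun i _ => norm_nonneg _).trans hσ
  rw [l2norm_eq_sqrt_sum_norm_blockVec_sq]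
  refine ((blockNullSpaceProperty_blockMap hA hc hlt').sqrt_sum_sq_sub_le hk hβ₁ hβ₂ hkβ₂ hlam hz
    hle hS hσ).trans ?_
  gcongr
  · exact error_coeff_le hk hβ₁ hβ₂ hkβ₂ hlam hε
  · exact error_const_le hk hβ₁ hβ₂ hkβ₂ hlam hε

theorem stmt_19 {m l d : ℕ} (A : Matrix (Fin m) (Fin l × Fin d) ℝ)
    (hA : ∀ i, (blk A i).transpose * blk A i = 1)
    (k : ℕ) (hk : 2 ≤ k)
    (hμB : blockCoherence A < 1 / ((2 * (k : ℝ) - 1) * d))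
    (x : Fin l × Fin d → ℝ) (z : Fin m → ℝ) (b : Fin m → ℝ) (hb : b = A.mulVec x + z)
    (ε lam : ℝ) (hz : l2norm z ≤ ε) (hlam : 0 < lam)
    (xs : Fin l × Fin d → ℝ)
    (hmin : ∀ u : Fin l × Fin d → ℝ,
      l21norm xs + 1 / (2 * lam) * l2norm (b - A.mulVec xs) ^ 2 ≤
        l21norm u + 1 / (2 * lam) * l2norm (b - A.mulVec u) ^ 2)
    (xk : Fin l × Fin d → ℝ) (hxk1 : blockSparse k xk)
    (hxk2 : ∀ y : Fin l × Fin d → ℝ, blockSparse k y → l2norm (xk - x) ≤ l2norm (y - x)) :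
    l2norm (xs - x) ≤
      (2 * Real.sqrt k * beta1 k d (blockCoherence A) * fk k (beta2 k d (blockCoherence A)) * lam
          + 2 * gk k (beta2 k d (blockCoherence A)) * ε)
        / (Real.sqrt k * (1 - Real.sqrt k * beta2 k d (blockCoherence A))
          * (Real.sqrt k * beta1 k d (blockCoherence A) * lam + ε)) * l21norm (x - xk)
      + (Real.sqrt k * beta1 k d (blockCoherence A)
            * (5 + 2 * Real.sqrt k * beta2 k d (blockCoherence A)) * lam
          + 2 * gk k (beta2 k d (blockCoherence A)) * ε)
        * (Real.sqrt k * beta1 k d (blockCoherence A) * lam + ε)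
        / (Real.sqrt k * (1 - Real.sqrt k * beta2 k d (blockCoherence A)) * lam) :=
  stmt_19_general A hA k d hμB x z b hb ε lam hz hlam xs (hmin x) xk hxk1
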